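/- arXiv:1403.1682 — 9 statements merged into one kernel-verified Lean document; each statement's English description precedes it below -/
import Mathlib

section
/- Suppose that in degree k the spaces H^k_∂, H^k_∂̄, H^k_BC, H^k_A, A^k, B^k, C^k, D^k, E^k, F^k are all finite-dimensional, and that dim H^k_A = dim H^k_BC and dim H^k_∂ = dim H^k_∂̄. Then dim H^k_BC ≥ dim H^k_∂̄. (This is the algebraic core of the paper's main Frölicher-type inequality: on a compact generalized complex manifold the two dimension hypotheses hold by Hodge theory, and the conclusion is the inequality dim GH^k_BC(M) ≥ dim GH^k_∂̄(M).) -/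
open Submodule LinearMap Module

section Setup

variable (U : ℤ → Type*) [∀ k, AddCommGroup (U k)] [∀ k, Module ℂ (U k)]

/-- The identification `U a → U b` induced by an equality `a = b` of degrees. -/
def castU {a b : ℤ} (h : a = b) : U a →ₗ[ℂ] U b := by subst h; exact LinearMap.id

variable (D : ∀ k : ℤ, U k →ₗ[ℂ] U (k + 1)) (Db : ∀ k : ℤ, U k →ₗ[ℂ] U (k - 1))

/-- The composite `∂∂̄ : U^k → U^{k-1} → U^k`. -/
def ddbar (k : ℤ) : U k →ₗ[ℂ] U k :=
  (castU U (show k - 1 + 1 = k by ring)).comp ((D (k - 1)).comp (Db k))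

/-- `ker ∂ ∩ U^k` -/
def kerD (k : ℤ) : Submodule ℂ (U k) := LinearMap.ker (D k)

/-- `ker ∂̄ ∩ U^k` -/
def kerDb (k : ℤ) : Submodule ℂ (U k) := LinearMap.ker (Db k)

/-- `∂(U^{k-1})` -/
def imD (k : ℤ) : Submodule ℂ (U k) :=
  LinearMap.range ((castU U (show k - 1 + 1 = k by ring)).comp (D (k - 1)))

/-- `∂̄(U^{k+1})` -/
def imDb (k : ℤ) : Submodule ℂ (U k) :=
  LinearMap.range ((castU U (show k + 1 - 1 = k by ring)).comp (Db (k + 1)))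

/-- `ker (∂∂̄) ∩ U^k` -/
def kerDDbar (k : ℤ) : Submodule ℂ (U k) := LinearMap.ker (ddbar U D Db k)

/-- `(∂∂̄)(U^k)` -/
def imDDbar (k : ℤ) : Submodule ℂ (U k) := LinearMap.range (ddbar U D Db k)

end Setup

/-- The quotient of a submodule `p` by (the preimage in `p` of) a submodule `q`. -/
abbrev SubQuot {V : Type*} [AddCommGroup V] [Module ℂ V] (p q : Submodule ℂ V) :=
  ↥p ⧸ q.comap p.subtype

/-- The map `p/q → p'/q'` induced by the identity (inclusion) on representatives. -/
def qmap {V : Type*} [AddCommGroup V] [Module ℂ V] {p p' q q' : Submodule ℂ V}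
    (hp : p ≤ p') (hq : q ≤ q') : SubQuot p q →ₗ[ℂ] SubQuot p' q' :=
  Submodule.mapQ _ _ (Submodule.inclusion hp) fun x hx => by
    simp only [Submodule.mem_comap, Submodule.subtype_apply, Submodule.coe_inclusion] at hx ⊢
    exact hq hx

section Cohomology

variable (U : ℤ → Type*) [∀ k, AddCommGroup (U k)] [∀ k, Module ℂ (U k)]
variable (D : ∀ k : ℤ, U k →ₗ[ℂ] U (k + 1)) (Db : ∀ k : ℤ, U k →ₗ[ℂ] U (k - 1))

/-- `H^k_∂ = (ker ∂ ∩ U^k)/∂(U^{k-1})` -/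
abbrev Hd (k : ℤ) := SubQuot (kerD U D k) (imD U D k)

/-- `H^k_∂̄ = (ker ∂̄ ∩ U^k)/∂̄(U^{k+1})` -/
abbrev Hdb (k : ℤ) := SubQuot (kerDb U Db k) (imDb U Db k)

/-- `H^k_BC = (ker ∂ ∩ ker ∂̄ ∩ U^k)/(∂∂̄)(U^k)` -/
abbrev HBC (k : ℤ) := SubQuot (kerD U D k ⊓ kerDb U Db k) (imDDbar U D Db k)

/-- `H^k_A = (ker (∂∂̄) ∩ U^k)/(∂(U^{k-1}) + ∂̄(U^{k+1}))` -/
abbrev HA (k : ℤ) := SubQuot (kerDDbar U D Db k) (imD U D k ⊔ imDb U Db k)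

/-- `A^k = (∂(U^{k-1}) ∩ ∂̄(U^{k+1}))/(∂∂̄)(U^k)` -/
abbrev Avar (k : ℤ) := SubQuot (imD U D k ⊓ imDb U Db k) (imDDbar U D Db k)

/-- `B^k = (ker ∂̄ ∩ ∂(U^{k-1}))/(∂∂̄)(U^k)` -/
abbrev Bvar (k : ℤ) := SubQuot (kerDb U Db k ⊓ imD U D k) (imDDbar U D Db k)

/-- `C^k = (ker (∂∂̄) ∩ U^k)/((ker ∂̄ ∩ U^k) + ∂(U^{k-1}))` -/
abbrev Cvar (k : ℤ) := SubQuot (kerDDbar U D Db k) (kerDb U Db k ⊔ imD U D k)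

/-- `D^k = (ker ∂ ∩ ∂̄(U^{k+1}))/(∂∂̄)(U^k)` -/
abbrev Dvar (k : ℤ) := SubQuot (kerD U D k ⊓ imDb U Db k) (imDDbar U D Db k)

/-- `E^k = (ker (∂∂̄) ∩ U^k)/((ker ∂ ∩ U^k) + ∂̄(U^{k+1}))` -/
abbrev Evar (k : ℤ) := SubQuot (kerDDbar U D Db k) (kerD U D k ⊔ imDb U Db k)

/-- `F^k = (ker (∂∂̄) ∩ U^k)/((ker ∂ ∩ U^k) + (ker ∂̄ ∩ U^k))` -/
abbrev Fvar (k : ℤ) := SubQuot (kerDDbar U D Db k) (kerD U D k ⊔ kerDb U Db k)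

end Cohomology
section Helpers

variable {V : Type*} [AddCommGroup V] [Module ℂ V]

theorem rank_subQuot_add (p q r : Submodule ℂ V) (hqp : q ≤ p) (hrq : r ≤ q) :
    Module.rank ℂ (SubQuot p q) + Module.rank ℂ (SubQuot q r) = Module.rank ℂ (SubQuot p r) := by
  let f : SubQuot p r →ₗ[ℂ] SubQuot p q := qmap le_rfl hrq
  let g : SubQuot q r →ₗ[ℂ] SubQuot p r := qmap hqp le_rfl
  have hf : Function.Surjective f := by
    intro y
    obtain ⟨x, rfl⟩ := Submodule.Quotient.mk_surjective _ y
    exact ⟨Submodule.Quotient.mk x, rfl⟩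
  have hg : Function.Injective g := by
    rw [injective_iff_map_eq_zero]
    intro y hy
    obtain ⟨x, rfl⟩ := Submodule.Quotient.mk_surjective _ y
    have hy2 : (Submodule.Quotient.mk (Submodule.inclusion hqp x) : SubQuot p r) = 0 := hy
    rw [Submodule.Quotient.mk_eq_zero] at hy2 ⊢
    exact hy2
  have hk : LinearMap.ker f = LinearMap.range g := by
    ext y
    obtain ⟨x, rfl⟩ := Submodule.Quotient.mk_surjective _ y
    constructor
    · intro hy
      have hy2 : (Submodule.Quotient.mk x : SubQuot p q) = 0 := hy
      rw [Submodule.Quotient.mk_eq_zero] at hy2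
      exact ⟨Submodule.Quotient.mk ⟨x.1, hy2⟩, rfl⟩
    · rintro ⟨z, hz⟩
      obtain ⟨w, rfl⟩ := Submodule.Quotient.mk_surjective _ z
      rw [← hz]
      change (Submodule.Quotient.mk (Submodule.inclusion hqp w) : SubQuot p q) = 0
      rw [Submodule.Quotient.mk_eq_zero]
      exact w.2
  rw [← LinearMap.rank_range_add_rank_ker f, hk, rank_range_of_surjective f hf,
    (LinearEquiv.ofInjective g hg).rank_eq]

theorem rank_subQuot_inf (p q : Submodule ℂ V) :
    Module.rank ℂ (SubQuot p (p ⊓ q)) = Module.rank ℂ (SubQuot (p ⊔ q) q) :=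
  (LinearMap.quotientInfEquivSupQuotient p q).rank_eq

/-- `dim K/I = dim (K ∩ L)/(I ∩ L) + dim (K + L)/(I + L)` -/
theorem rank_subQuot_split (K L I : Submodule ℂ V) (h : I ≤ K) :
    Module.rank ℂ (SubQuot (K ⊔ L) (I ⊔ L)) + Module.rank ℂ (SubQuot (K ⊓ L) (I ⊓ L))
      = Module.rank ℂ (SubQuot K I) := by
  have e1 := rank_subQuot_inf K (I ⊔ L)
  have e2 := rank_subQuot_inf (K ⊓ L) I
  have a1 : K ⊔ (I ⊔ L) = K ⊔ L := by rw [← sup_assoc, sup_eq_left.mpr h]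
  have a2 : K ⊓ (I ⊔ L) = K ⊓ L ⊔ I := by
    rw [inf_comm, sup_inf_assoc_of_le L h, inf_comm, sup_comm]
  have a3 : K ⊓ L ⊓ I = I ⊓ L := by
    rw [inf_right_comm, inf_eq_right.mpr h]
  rw [a1, a2] at e1
  rw [a3] at e2
  rw [← e1, e2]
  exact rank_subQuot_add _ _ _ (sup_le inf_le_left h) le_sup_right

theorem rank_subQuot_ineq (K L I J M N : Submodule ℂ V) (hIK : I ≤ K) (hJL : J ≤ L)
    (hKM : K ≤ M) (hLM : L ≤ M) (hNI : N ≤ I) (hNJ : N ≤ J) :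
    Module.rank ℂ (SubQuot K I) + Module.rank ℂ (SubQuot L J) ≤
      Module.rank ℂ (SubQuot M (I ⊔ J)) + Module.rank ℂ (SubQuot (K ⊓ L) N) := by
  have e1 := rank_subQuot_split K L I hIK
  have e2 := rank_subQuot_split L I J hJL
  rw [sup_comm L I, sup_comm J I, inf_comm L I, inf_comm J I] at e2
  have e3 := rank_subQuot_add (K ⊔ L) (I ⊔ L) (I ⊔ J) (sup_le_sup_right hIK L)
    (sup_le_sup_left hJL I)
  have e4 := rank_subQuot_add (K ⊓ L) (I ⊓ L) (I ⊓ J) (inf_le_inf_right L hIK)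
    (inf_le_inf_left I hJL)
  have e5 := rank_subQuot_add M (K ⊔ L) (I ⊔ J) (sup_le hKM hLM) (sup_le_sup hIK hJL)
  have e6 := rank_subQuot_add (K ⊓ L) (I ⊓ J) N (inf_le_inf hIK hJL) (le_inf hNI hNJ)
  rw [← e5, ← e6, ← e1, ← e2, add_add_add_comm, e3, e4]
  rw [← add_assoc]
  refine le_trans ?_ (le_self_add)
  exact add_le_add le_add_self le_rfl

end Helpers

section Casts

variable (U : ℤ → Type*) [∀ k, AddCommGroup (U k)] [∀ k, Module ℂ (U k)]
variable (D : ∀ k : ℤ, U k →ₗ[ℂ] U (k + 1)) (Db : ∀ k : ℤ, U k →ₗ[ℂ] U (k - 1))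

theorem D_castU_D (hD2 : ∀ k : ℤ, (D (k + 1)).comp (D k) = 0) (a k : ℤ) (h : a + 1 = k)
    (x : U a) : D k (castU U h (D a x)) = 0 := by
  subst h
  exact LinearMap.congr_fun (hD2 a) x

theorem Db_castU_Db (hDb2 : ∀ k : ℤ, (Db (k - 1)).comp (Db k) = 0) (a k : ℤ) (h : a - 1 = k)
    (x : U a) : Db k (castU U h (Db a x)) = 0 := by
  subst h
  exact LinearMap.congr_fun (hDb2 a) x

end Casts

/-- If `dim H^k_A = dim H^k_BC` and `dim H^k_∂ = dim H^k_∂̄` (which hold on a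
compact generalized complex manifold by Hodge theory), then `dim H^k_BC ≥ dim H^k_∂̄`. -/
theorem frolicher_type_inequality_core
    (n : ℕ) (U : ℤ → Type*) [∀ k, AddCommGroup (U k)] [∀ k, Module ℂ (U k)]
    (hvan : ∀ k : ℤ, (n : ℤ) < |k| → ∀ x : U k, x = 0)
    (D : ∀ k : ℤ, U k →ₗ[ℂ] U (k + 1)) (Db : ∀ k : ℤ, U k →ₗ[ℂ] U (k - 1))
    (hD2 : ∀ k : ℤ, (D (k + 1)).comp (D k) = 0)
    (hDb2 : ∀ k : ℤ, (Db (k - 1)).comp (Db k) = 0)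
    (hanti : ∀ k : ℤ, ddbar U D Db k
      + (castU U (show k + 1 - 1 = k by ring)).comp ((Db (k + 1)).comp (D k)) = 0)
    (k : ℤ)
    (h1 : FiniteDimensional ℂ (Hd U D k))
    (h2 : FiniteDimensional ℂ (Hdb U Db k))
    (h3 : FiniteDimensional ℂ (HBC U D Db k))
    (h4 : FiniteDimensional ℂ (HA U D Db k))
    (h5 : FiniteDimensional ℂ (Avar U D Db k))
    (h6 : FiniteDimensional ℂ (Bvar U D Db k))
    (h7 : FiniteDimensional ℂ (Cvar U D Db k))
    (h8 : FiniteDimensional ℂ (Dvar U D Db k))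
    (h9 : FiniteDimensional ℂ (Evar U D Db k))
    (h10 : FiniteDimensional ℂ (Fvar U D Db k))
    (hA_eq_BC : finrank ℂ (HA U D Db k) = finrank ℂ (HBC U D Db k))
    (hd_eq_db : finrank ℂ (Hd U D k) = finrank ℂ (Hdb U Db k)) :
    finrank ℂ (Hdb U Db k) ≤ finrank ℂ (HBC U D Db k) := by
  have hanti' : ∀ x : U k, ddbar U D Db k x
      = -(castU U (show k + 1 - 1 = k by ring)) (Db (k + 1) (D k x)) := fun x =>
    eq_neg_of_add_eq_zero_left (LinearMap.congr_fun (hanti k) x)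
  have key := rank_subQuot_ineq (kerD U D k) (kerDb U Db k) (imD U D k) (imDb U Db k)
    (kerDDbar U D Db k) (imDDbar U D Db k)
    (by rintro _ ⟨x, rfl⟩; exact D_castU_D U D hD2 _ _ _ x)
    (by rintro _ ⟨x, rfl⟩; exact Db_castU_Db U Db hDb2 _ _ _ x)
    (by
      intro x hx
      have hx2 : D k x = 0 := hx
      change ddbar U D Db k x = 0
      rw [hanti', hx2, map_zero, map_zero, neg_zero])
    (by
      intro x hx
      have hx2 : Db k x = 0 := hx
      change castU U _ (D (k - 1) (Db k x)) = 0
      rw [hx2, map_zero, map_zero])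
    (by rintro _ ⟨x, rfl⟩; exact ⟨Db k x, rfl⟩)
    (by
      rintro _ ⟨x, rfl⟩
      rw [hanti']
      exact neg_mem ⟨D k x, rfl⟩)
  change Module.rank ℂ (Hd U D k) + Module.rank ℂ (Hdb U Db k) ≤
    Module.rank ℂ (HA U D Db k) + Module.rank ℂ (HBC U D Db k) at key
  rw [← finrank_eq_rank, ← finrank_eq_rank, ← finrank_eq_rank, ← finrank_eq_rank] at key
  have key2 : finrank ℂ (Hd U D k) + finrank ℂ (Hdb U Db k) ≤
    finrank ℂ (HA U D Db k) + finrank ℂ (HBC U D Db k) := by exact_mod_cast key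
  omega
end

section
/- Suppose that in degree k the spaces H^k_∂, H^k_∂̄, H^k_BC, H^k_A, A^k, B^k, C^k, D^k, E^k, F^k are all finite-dimensional. Then dim H^k_BC + dim H^k_A ≥ dim H^k_∂ + dim H^k_∂̄. (This is the Angella–Tomassini Frölicher-type inequality for generalized complex manifolds, in its algebraic form.) -/
open Submodule LinearMap Module

theorem rank_chain {V : Type*} [AddCommGroup V] [Module ℂ V] {p m q : Submodule ℂ V}
    (h1 : q ≤ m) (h2 : m ≤ p) :
    Module.rank ℂ (SubQuot p q) = Module.rank ℂ (SubQuot p m) + Module.rank ℂ (SubQuot m q) := by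
  let f : SubQuot p q →ₗ[ℂ] SubQuot p m := qmap le_rfl h1
  let g : SubQuot m q →ₗ[ℂ] SubQuot p q := qmap h2 le_rfl
  have hf : Function.Surjective f := by
    intro x
    obtain ⟨y, rfl⟩ := Submodule.Quotient.mk_surjective _ x
    exact ⟨Submodule.Quotient.mk y, rfl⟩
  have hg : Function.Injective g := by
    rw [injective_iff_map_eq_zero]
    intro x hx
    obtain ⟨y, rfl⟩ := Submodule.Quotient.mk_surjective _ x
    have hx' : (Submodule.Quotient.mk (Submodule.inclusion h2 y) : SubQuot p q) = 0 := hx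
    rw [Submodule.Quotient.mk_eq_zero] at hx' ⊢
    exact hx'
  have hfg : LinearMap.ker f = LinearMap.range g := by
    ext x
    constructor
    · intro hx
      obtain ⟨y, rfl⟩ := Submodule.Quotient.mk_surjective _ x
      have hx' : (Submodule.Quotient.mk (Submodule.inclusion le_rfl y) : SubQuot p m) = 0 := hx
      rw [Submodule.Quotient.mk_eq_zero] at hx'
      exact ⟨Submodule.Quotient.mk ⟨y.1, hx'⟩, rfl⟩
    · rintro ⟨y, rfl⟩
      obtain ⟨z, rfl⟩ := Submodule.Quotient.mk_surjective _ y
      change (Submodule.Quotient.mk (Submodule.inclusion le_rfl (Submodule.inclusion h2 z)) :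
        SubQuot p m) = 0
      rw [Submodule.Quotient.mk_eq_zero]
      exact z.2
  rw [LinearMap.rank_eq_of_surjective hf, hfg, (LinearEquiv.ofInjective g hg).rank_eq]

theorem rank_iso {V : Type*} [AddCommGroup V] [Module ℂ V] (p q : Submodule ℂ V) :
    Module.rank ℂ (SubQuot p (p ⊓ q)) = Module.rank ℂ (SubQuot (p ⊔ q) q) :=
  (LinearMap.quotientInfEquivSupQuotient p q).rank_eq

theorem lattice_rank {V : Type*} [AddCommGroup V] [Module ℂ V] {P Q I J K R : Submodule ℂ V}
    (hI : I ≤ P) (hJ : J ≤ Q) (hR : R ≤ I ⊓ J) (hK : P ⊔ Q ≤ K) :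
    Module.rank ℂ (SubQuot P I) + Module.rank ℂ (SubQuot Q J) ≤
      Module.rank ℂ (SubQuot (P ⊓ Q) R) + Module.rank ℂ (SubQuot K (I ⊔ J)) := by
  have e1 := rank_chain (p := P) (m := I ⊔ P ⊓ Q) (q := I) le_sup_left (sup_le hI inf_le_left)
  have e2 := rank_iso (P ⊓ Q) I
  have e3 := rank_iso P (I ⊔ Q)
  have e4 := rank_chain (p := Q) (m := J ⊔ I ⊓ Q) (q := J) le_sup_left (sup_le hJ inf_le_right)
  have e5 := rank_iso (I ⊓ Q) J
  have e6 := rank_iso Q (I ⊔ J)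
  have e7 := rank_chain (p := P ⊓ Q) (m := I ⊓ Q) (q := R)
    (hR.trans (inf_le_inf le_rfl hJ)) (inf_le_inf hI le_rfl)
  have e8 := rank_chain (p := I ⊓ Q) (m := I ⊓ J) (q := R) hR (inf_le_inf le_rfl hJ)
  have e9 := rank_chain (p := K) (m := P ⊔ Q) (q := I ⊔ J) (sup_le_sup hI hJ) hK
  have e10 := rank_chain (p := P ⊔ Q) (m := I ⊔ Q) (q := I ⊔ J)
    (sup_le_sup le_rfl hJ) (sup_le_sup hI le_rfl)
  rw [show P ⊓ Q ⊓ I = I ⊓ Q by rw [inf_right_comm, inf_eq_right.2 hI],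
    sup_comm (P ⊓ Q) I] at e2
  rw [show P ⊓ (I ⊔ Q) = I ⊔ P ⊓ Q by
      rw [inf_comm, sup_inf_assoc_of_le Q hI, inf_comm],
    show P ⊔ (I ⊔ Q) = P ⊔ Q by rw [← sup_assoc, sup_eq_left.2 hI]] at e3
  rw [show I ⊓ Q ⊓ J = I ⊓ J by rw [inf_assoc, inf_eq_right.2 hJ], sup_comm (I ⊓ Q) J] at e5
  rw [show Q ⊓ (I ⊔ J) = J ⊔ I ⊓ Q by
      rw [inf_comm, sup_comm I J, sup_inf_assoc_of_le I hJ],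
    show Q ⊔ (I ⊔ J) = I ⊔ Q by rw [sup_left_comm, sup_eq_left.2 hJ]] at e6
  rw [e1, e4, e7, e8, e9, e10, e3, ← e2, e6, ← e5]
  set a := Module.rank ℂ (SubQuot (P ⊔ Q) (I ⊔ Q))
  set b := Module.rank ℂ (SubQuot (P ⊓ Q) (I ⊓ Q))
  set c := Module.rank ℂ (SubQuot (I ⊔ Q) (I ⊔ J))
  set d := Module.rank ℂ (SubQuot (I ⊓ Q) (I ⊓ J))
  calc a + b + (c + d) = (b + (d + 0)) + (0 + (a + c)) := by ring
    _ ≤ _ := by gcongr <;> exact zero_le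

theorem castU_apply_eq_zero (U : ℤ → Type*) [∀ k, AddCommGroup (U k)] [∀ k, Module ℂ (U k)]
    (D : ∀ k : ℤ, U k →ₗ[ℂ] U (k + 1)) {a b : ℤ} (h : a = b) (x : U a) (hx : D a x = 0) :
    D b (castU U h x) = 0 := by
  subst h; exact hx

theorem castU_apply_eq_zero' (U : ℤ → Type*) [∀ k, AddCommGroup (U k)] [∀ k, Module ℂ (U k)]
    (D : ∀ k : ℤ, U k →ₗ[ℂ] U (k - 1)) {a b : ℤ} (h : a = b) (x : U a) (hx : D a x = 0) :
    D b (castU U h x) = 0 := by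
  subst h; exact hx

/-- the Angella–Tomassini Frölicher-type inequality, in its algebraic form:
`dim H^k_BC + dim H^k_A ≥ dim H^k_∂ + dim H^k_∂̄`. -/
theorem angella_tomassini_inequality
    (n : ℕ) (U : ℤ → Type*) [∀ k, AddCommGroup (U k)] [∀ k, Module ℂ (U k)]
    (hvan : ∀ k : ℤ, (n : ℤ) < |k| → ∀ x : U k, x = 0)
    (D : ∀ k : ℤ, U k →ₗ[ℂ] U (k + 1)) (Db : ∀ k : ℤ, U k →ₗ[ℂ] U (k - 1))
    (hD2 : ∀ k : ℤ, (D (k + 1)).comp (D k) = 0)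
    (hDb2 : ∀ k : ℤ, (Db (k - 1)).comp (Db k) = 0)
    (hanti : ∀ k : ℤ, ddbar U D Db k
      + (castU U (show k + 1 - 1 = k by ring)).comp ((Db (k + 1)).comp (D k)) = 0)
    (k : ℤ)
    (h1 : FiniteDimensional ℂ (Hd U D k))
    (h2 : FiniteDimensional ℂ (Hdb U Db k))
    (h3 : FiniteDimensional ℂ (HBC U D Db k))
    (h4 : FiniteDimensional ℂ (HA U D Db k))
    (h5 : FiniteDimensional ℂ (Avar U D Db k))
    (h6 : FiniteDimensional ℂ (Bvar U D Db k))
    (h7 : FiniteDimensional ℂ (Cvar U D Db k))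
    (h8 : FiniteDimensional ℂ (Dvar U D Db k))
    (h9 : FiniteDimensional ℂ (Evar U D Db k))
    (h10 : FiniteDimensional ℂ (Fvar U D Db k)) :
    finrank ℂ (Hd U D k) + finrank ℂ (Hdb U Db k)
      ≤ finrank ℂ (HBC U D Db k) + finrank ℂ (HA U D Db k) := by
  have hI : imD U D k ≤ kerD U D k := by
    rintro _ ⟨x, rfl⟩
    exact castU_apply_eq_zero U D _ _ (LinearMap.congr_fun (hD2 (k - 1)) x)
  have hJ : imDb U Db k ≤ kerDb U Db k := by
    rintro _ ⟨x, rfl⟩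
    exact castU_apply_eq_zero' U Db _ _ (LinearMap.congr_fun (hDb2 (k + 1)) x)
  have han := eq_neg_of_add_eq_zero_left (hanti k)
  have hR : imDDbar U D Db k ≤ imD U D k ⊓ imDb U Db k := by
    rintro _ ⟨x, rfl⟩
    refine ⟨⟨Db k x, rfl⟩, ?_⟩
    rw [han]
    exact ⟨-(D k x), by simp⟩
  have hK : kerD U D k ⊔ kerDb U Db k ≤ kerDDbar U D Db k := by
    refine sup_le ?_ ?_
    · intro x hx
      have hx' : D k x = 0 := hx
      change ddbar U D Db k x = 0
      rw [han]
      simp [hx']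
    · intro x hx
      have hx' : Db k x = 0 := hx
      change ddbar U D Db k x = 0
      simp [ddbar, hx']
  have h := lattice_rank hI hJ hR hK
  rw [← finrank_eq_rank, ← finrank_eq_rank, ← finrank_eq_rank, ← finrank_eq_rank] at h
  exact_mod_cast h
end

section
/- Suppose that in degree k the spaces H^k_∂, H^k_∂̄, H^k_BC, H^k_A, A^k, B^k, C^k, D^k, E^k, F^k are all finite-dimensional. Then dim H^k_BC + dim H^k_A = dim H^k_∂ + dim H^k_∂̄ + dim A^k + dim F^k. -/
open Submodule LinearMap Module

theorem sq_rank_chain {V : Type*} [AddCommGroup V] [Module ℂ V] {p r q : Submodule ℂ V}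
    (hq : q ≤ r) (hr : r ≤ p) :
    Module.rank ℂ (SubQuot p q) = Module.rank ℂ (SubQuot r q) + Module.rank ℂ (SubQuot p r) := by
  let f : SubQuot r q →ₗ[ℂ] SubQuot p q := qmap hr le_rfl
  let g : SubQuot p q →ₗ[ℂ] SubQuot p r := qmap le_rfl hq
  have hf : Function.Injective f := by
    rw [← LinearMap.ker_eq_bot, eq_bot_iff]
    intro x
    induction x using Submodule.Quotient.induction_on with
    | _ x =>
      intro hx
      have h2 : (Submodule.Quotient.mk (Submodule.inclusion hr x) : SubQuot p q) = 0 := hx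
      rw [Submodule.Quotient.mk_eq_zero] at h2
      rw [Submodule.mem_bot, Submodule.Quotient.mk_eq_zero]
      exact h2
  have hg : Function.Surjective g := by
    intro y
    induction y using Submodule.Quotient.induction_on with
    | _ y => exact ⟨Submodule.Quotient.mk y, rfl⟩
  have hfg : LinearMap.ker g = LinearMap.range f := by
    apply le_antisymm
    · intro x
      induction x using Submodule.Quotient.induction_on with
      | _ x =>
        intro hx
        have h2 : (Submodule.Quotient.mk (Submodule.inclusion le_rfl x) : SubQuot p r) = 0 := hx
        rw [Submodule.Quotient.mk_eq_zero] at h2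
        exact ⟨Submodule.Quotient.mk ⟨x.1, h2⟩, rfl⟩
    · rintro _ ⟨x, rfl⟩
      induction x using Submodule.Quotient.induction_on with
      | _ x =>
        change (Submodule.Quotient.mk (Submodule.inclusion le_rfl (Submodule.inclusion hr x)) :
          SubQuot p r) = 0
        rw [Submodule.Quotient.mk_eq_zero]
        exact x.2
  have h := LinearMap.rank_range_add_rank_ker g
  rw [hfg, LinearMap.range_eq_top.2 hg, rank_top, ← (LinearEquiv.ofInjective f hf).rank_eq] at h
  rw [← h, add_comm]

theorem sq_rank_iso {V : Type*} [AddCommGroup V] [Module ℂ V] (p q : Submodule ℂ V) :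
    Module.rank ℂ (SubQuot (p ⊔ q) q) = Module.rank ℂ (SubQuot p (p ⊓ q)) :=
  (LinearMap.quotientInfEquivSupQuotient p q).rank_eq.symm

theorem sq_rank_square {V : Type*} [AddCommGroup V] [Module ℂ V] {K L I J : Submodule ℂ V}
    (hI : I ≤ K) (hJ : J ≤ L) :
    Module.rank ℂ (SubQuot K I) + Module.rank ℂ (SubQuot L J)
      = Module.rank ℂ (SubQuot (K ⊓ L) (I ⊓ J)) + Module.rank ℂ (SubQuot (K ⊔ L) (I ⊔ J)) := by
  have a1 := sq_rank_chain (p := K) (r := K ⊓ J ⊔ I) (q := I) le_sup_right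
    (sup_le inf_le_left hI)
  have a2 := sq_rank_iso (K ⊓ J) I
  have e2 : K ⊓ J ⊓ I = I ⊓ J := by
    rw [inf_right_comm, inf_eq_right.2 hI]
  have a3 := sq_rank_iso K (I ⊔ J)
  have e3 : K ⊓ (I ⊔ J) = K ⊓ J ⊔ I := by
    rw [sup_comm I J, inf_sup_assoc_of_le J hI]
  have e3' : K ⊔ (I ⊔ J) = K ⊔ J := by rw [← sup_assoc, sup_eq_left.2 hI]
  have b1 := sq_rank_chain (p := L) (r := K ⊓ L ⊔ J) (q := J) le_sup_right
    (sup_le inf_le_right hJ)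
  have b2 := sq_rank_iso (K ⊓ L) J
  have f2 : K ⊓ L ⊓ J = K ⊓ J := by rw [inf_assoc, inf_eq_right.2 hJ]
  have b3 := sq_rank_iso L (K ⊔ J)
  have f3 : L ⊓ (K ⊔ J) = K ⊓ L ⊔ J := by rw [inf_comm K L, inf_sup_assoc_of_le K hJ]
  have f3' : L ⊔ (K ⊔ J) = K ⊔ L := by
    rw [sup_left_comm, sup_eq_left.2 hJ]
  have c1 := sq_rank_chain (p := K ⊓ L) (r := K ⊓ J) (q := I ⊓ J) (inf_le_inf_right _ hI)
    (inf_le_inf_left _ hJ)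
  have c2 := sq_rank_chain (p := K ⊔ L) (r := K ⊔ J) (q := I ⊔ J) (sup_le_sup_right hI _)
    (sup_le_sup_left hJ _)
  rw [e2] at a2
  rw [e3, e3'] at a3
  rw [f2] at b2
  rw [f3, f3'] at b3
  rw [a1, a2, b1, b2, c1, c2, a3, b3]
  ring

theorem sq_rank_total {V : Type*} [AddCommGroup V] [Module ℂ V] {K L I J P Q : Submodule ℂ V}
    (hI : I ≤ K) (hJ : J ≤ L) (hQI : Q ≤ I) (hQJ : Q ≤ J) (hK : K ≤ P) (hL : L ≤ P) :
    Module.rank ℂ (SubQuot (K ⊓ L) Q) + Module.rank ℂ (SubQuot P (I ⊔ J))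
      = Module.rank ℂ (SubQuot K I) + Module.rank ℂ (SubQuot L J)
        + Module.rank ℂ (SubQuot (I ⊓ J) Q) + Module.rank ℂ (SubQuot P (K ⊔ L)) := by
  rw [sq_rank_square hI hJ, sq_rank_chain (le_inf hQI hQJ) (inf_le_inf hI hJ),
    sq_rank_chain (sup_le_sup hI hJ) (sup_le hK hL)]
  ring

theorem castU_D {U : ℤ → Type*} [∀ k, AddCommGroup (U k)] [∀ k, Module ℂ (U k)]
    (D : ∀ k : ℤ, U k →ₗ[ℂ] U (k + 1)) {a b : ℤ} (h : a = b) (x : U a) (hx : D a x = 0) :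
    D b (castU U h x) = 0 := by
  subst h; exact hx

theorem castU_Db {U : ℤ → Type*} [∀ k, AddCommGroup (U k)] [∀ k, Module ℂ (U k)]
    (Db : ∀ k : ℤ, U k →ₗ[ℂ] U (k - 1)) {a b : ℤ} (h : a = b) (x : U a) (hx : Db a x = 0) :
    Db b (castU U h x) = 0 := by
  subst h; exact hx

/-- `dim H^k_BC + dim H^k_A = dim H^k_∂ + dim H^k_∂̄ + dim A^k + dim F^k`. -/
theorem dim_BC_add_dim_A_eq
    (n : ℕ) (U : ℤ → Type*) [∀ k, AddCommGroup (U k)] [∀ k, Module ℂ (U k)]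
    (hvan : ∀ k : ℤ, (n : ℤ) < |k| → ∀ x : U k, x = 0)
    (D : ∀ k : ℤ, U k →ₗ[ℂ] U (k + 1)) (Db : ∀ k : ℤ, U k →ₗ[ℂ] U (k - 1))
    (hD2 : ∀ k : ℤ, (D (k + 1)).comp (D k) = 0)
    (hDb2 : ∀ k : ℤ, (Db (k - 1)).comp (Db k) = 0)
    (hanti : ∀ k : ℤ, ddbar U D Db k
      + (castU U (show k + 1 - 1 = k by ring)).comp ((Db (k + 1)).comp (D k)) = 0)
    (k : ℤ)
    (h1 : FiniteDimensional ℂ (Hd U D k))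
    (h2 : FiniteDimensional ℂ (Hdb U Db k))
    (h3 : FiniteDimensional ℂ (HBC U D Db k))
    (h4 : FiniteDimensional ℂ (HA U D Db k))
    (h5 : FiniteDimensional ℂ (Avar U D Db k))
    (h6 : FiniteDimensional ℂ (Bvar U D Db k))
    (h7 : FiniteDimensional ℂ (Cvar U D Db k))
    (h8 : FiniteDimensional ℂ (Dvar U D Db k))
    (h9 : FiniteDimensional ℂ (Evar U D Db k))
    (h10 : FiniteDimensional ℂ (Fvar U D Db k)) :
    finrank ℂ (HBC U D Db k) + finrank ℂ (HA U D Db k)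
      = finrank ℂ (Hd U D k) + finrank ℂ (Hdb U Db k)
        + finrank ℂ (Avar U D Db k) + finrank ℂ (Fvar U D Db k) := by
  have hI : imD U D k ≤ kerD U D k := by
    rintro _ ⟨x, rfl⟩
    exact castU_D D _ _ (LinearMap.congr_fun (hD2 (k - 1)) x)
  have hJ : imDb U Db k ≤ kerDb U Db k := by
    rintro _ ⟨x, rfl⟩
    exact castU_Db Db _ _ (LinearMap.congr_fun (hDb2 (k + 1)) x)
  have hQI : imDDbar U D Db k ≤ imD U D k := by
    rintro _ ⟨x, rfl⟩
    exact ⟨Db k x, rfl⟩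
  have hpt : ∀ x : U k, ddbar U D Db k x
      = - castU U (show k + 1 - 1 = k by ring) (Db (k + 1) (D k x)) := fun x =>
    eq_neg_of_add_eq_zero_left (LinearMap.congr_fun (hanti k) x)
  have hQJ : imDDbar U D Db k ≤ imDb U Db k := by
    rintro _ ⟨x, rfl⟩
    rw [hpt]
    exact Submodule.neg_mem _ ⟨D k x, rfl⟩
  have hK : kerD U D k ≤ kerDDbar U D Db k := by
    intro x hx
    have hx' : D k x = 0 := hx
    change ddbar U D Db k x = 0
    rw [hpt, hx']
    simp
  have hL : kerDb U Db k ≤ kerDDbar U D Db k := by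
    intro x hx
    have hx' : Db k x = 0 := hx
    change castU U _ (D (k - 1) (Db k x)) = 0
    rw [hx']
    simp
  have h := sq_rank_total hI hJ hQI hQJ hK hL
  rw [← finrank_eq_rank, ← finrank_eq_rank, ← finrank_eq_rank, ← finrank_eq_rank,
    ← finrank_eq_rank, ← finrank_eq_rank] at h
  exact_mod_cast h
end

section
/- For every k, the sequence 0 → A^k → B^k → H^k_∂̄ → H^k_A → C^k → 0 is exact, where A^k → B^k and B^k → H^k_∂̄ are induced by the inclusions of representatives, H^k_∂̄ → H^k_A is induced by the identity on representatives, and H^k_A → C^k is induced by the quotient projection on representatives (Varouchas exact sequence). -/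
open Submodule LinearMap Module

section InducedMapLemmas

variable (U : ℤ → Type*) [∀ k, AddCommGroup (U k)] [∀ k, Module ℂ (U k)]
variable (D : ∀ k : ℤ, U k →ₗ[ℂ] U (k + 1)) (Db : ∀ k : ℤ, U k →ₗ[ℂ] U (k - 1))

lemma Db_castU {a b : ℤ} (h : a = b) (x : U a) :
    Db b (castU U h x) = castU U (show a - 1 = b - 1 by rw [h]) (Db a x) := by
  subst h; rfl

lemma imDb_le_kerDb (hDb2 : ∀ k : ℤ, (Db (k - 1)).comp (Db k) = 0) (k : ℤ) :
    imDb U Db k ≤ kerDb U Db k := by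
  rintro x ⟨y, rfl⟩
  have h0 : Db (k + 1 - 1) (Db (k + 1) y) = 0 := by
    simpa using DFunLike.congr_fun (hDb2 (k + 1)) y
  simp only [kerDb, LinearMap.mem_ker, LinearMap.comp_apply, Db_castU, h0, map_zero]

lemma imDDbar_le_imDb
    (hanti : ∀ k : ℤ, ddbar U D Db k
      + (castU U (show k + 1 - 1 = k by ring)).comp ((Db (k + 1)).comp (D k)) = 0)
    (k : ℤ) : imDDbar U D Db k ≤ imDb U Db k := by
  rintro x ⟨y, rfl⟩
  refine ⟨-(D k y), ?_⟩
  have h := DFunLike.congr_fun (hanti k) y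
  simp only [LinearMap.add_apply, LinearMap.comp_apply, LinearMap.zero_apply] at h
  simp only [LinearMap.comp_apply, map_neg]
  exact neg_eq_of_add_eq_zero_left h

lemma kerDb_le_kerDDbar (k : ℤ) : kerDb U Db k ≤ kerDDbar U D Db k := by
  intro x hx
  have hx' : Db k x = 0 := hx
  simp only [kerDDbar, LinearMap.mem_ker, ddbar, LinearMap.comp_apply, hx', map_zero]

end InducedMapLemmas
section Maps

variable (U : ℤ → Type*) [∀ k, AddCommGroup (U k)] [∀ k, Module ℂ (U k)]
variable (D : ∀ k : ℤ, U k →ₗ[ℂ] U (k + 1)) (Db : ∀ k : ℤ, U k →ₗ[ℂ] U (k - 1))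
variable (hDb2 : ∀ k : ℤ, (Db (k - 1)).comp (Db k) = 0)
variable (hanti : ∀ k : ℤ, ddbar U D Db k
  + (castU U (show k + 1 - 1 = k by ring)).comp ((Db (k + 1)).comp (D k)) = 0)

/-- `A^k → B^k`, induced by the inclusion of representatives. -/
def mapAB (k : ℤ) : Avar U D Db k →ₗ[ℂ] Bvar U D Db k :=
  qmap (le_inf (inf_le_right.trans (imDb_le_kerDb U Db hDb2 k)) inf_le_left) le_rfl

/-- `B^k → H^k_∂̄`, induced by the inclusion of representatives. -/
def mapBH (k : ℤ) : Bvar U D Db k →ₗ[ℂ] Hdb U Db k :=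
  qmap inf_le_left (imDDbar_le_imDb U D Db hanti k)

/-- `H^k_∂̄ → H^k_A`, induced by the identity on representatives. -/
def mapHH (k : ℤ) : Hdb U Db k →ₗ[ℂ] HA U D Db k :=
  qmap (kerDb_le_kerDDbar U D Db k) le_sup_right

/-- `H^k_A → C^k`, induced by the quotient projection on representatives. -/
def mapHC (k : ℤ) : HA U D Db k →ₗ[ℂ] Cvar U D Db k :=
  qmap le_rfl (sup_le le_sup_right ((imDb_le_kerDb U Db hDb2 k).trans le_sup_left))

end Maps

lemma qmap_exact {V : Type*} [AddCommGroup V] [Module ℂ V] {p p' p'' q q' q'' : Submodule ℂ V}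
    (hp : p ≤ p') (hq : q ≤ q') (hp' : p' ≤ p'') (hq' : q' ≤ q'')
    (h1 : p ≤ q'') (h2 : p' ⊓ q'' ≤ p ⊔ q') :
    Function.Exact ⇑(qmap hp hq) ⇑(qmap hp' hq') := by
  intro y
  obtain ⟨⟨y, hy⟩, rfl⟩ := Submodule.Quotient.mk_surjective _ y
  constructor
  · intro h
    have hy2 : y ∈ q'' := by
      simpa [qmap, Submodule.Quotient.mk_eq_zero] using h
    obtain ⟨a, ha, b, hb, hab⟩ := Submodule.mem_sup.1 (h2 ⟨hy, hy2⟩)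
    refine ⟨Submodule.Quotient.mk ⟨a, ha⟩, ?_⟩
    refine (Submodule.Quotient.eq _).2 ?_
    change a - y ∈ q'
    have : a - y = -b := by rw [← hab]; abel
    rw [this]
    exact q'.neg_mem hb
  · rintro ⟨x, hx⟩
    obtain ⟨⟨x, hxp⟩, rfl⟩ := Submodule.Quotient.mk_surjective _ x
    rw [← hx]
    refine (Submodule.Quotient.mk_eq_zero _).2 ?_
    change x ∈ q''
    exact h1 hxp

lemma qmap_injective {V : Type*} [AddCommGroup V] [Module ℂ V] {p p' q : Submodule ℂ V}
    (hp : p ≤ p') : Function.Injective ⇑(qmap hp (le_refl q)) := by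
  rw [injective_iff_map_eq_zero]
  intro x hx
  obtain ⟨⟨x, hxp⟩, rfl⟩ := Submodule.Quotient.mk_surjective _ x
  have hxq : x ∈ q := by
    simpa [qmap, Submodule.Quotient.mk_eq_zero] using hx
  exact (Submodule.Quotient.mk_eq_zero _).2 hxq

lemma qmap_surjective {V : Type*} [AddCommGroup V] [Module ℂ V] {p q q' : Submodule ℂ V}
    (hq : q ≤ q') : Function.Surjective ⇑(qmap (le_refl p) hq) := by
  intro x
  obtain ⟨x, rfl⟩ := Submodule.Quotient.mk_surjective _ x
  exact ⟨Submodule.Quotient.mk x, rfl⟩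

/-- the Varouchas sequence `0 → A^k → B^k → H^k_∂̄ → H^k_A → C^k → 0`
is exact. -/
theorem varouchas_exact_sequence_one
    (n : ℕ) (U : ℤ → Type*) [∀ k, AddCommGroup (U k)] [∀ k, Module ℂ (U k)]
    (hvan : ∀ k : ℤ, (n : ℤ) < |k| → ∀ x : U k, x = 0)
    (D : ∀ k : ℤ, U k →ₗ[ℂ] U (k + 1)) (Db : ∀ k : ℤ, U k →ₗ[ℂ] U (k - 1))
    (hD2 : ∀ k : ℤ, (D (k + 1)).comp (D k) = 0)
    (hDb2 : ∀ k : ℤ, (Db (k - 1)).comp (Db k) = 0)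
    (hanti : ∀ k : ℤ, ddbar U D Db k
      + (castU U (show k + 1 - 1 = k by ring)).comp ((Db (k + 1)).comp (D k)) = 0)
    (k : ℤ) :
    Function.Injective ⇑(mapAB U D Db hDb2 k) ∧
    Function.Exact ⇑(mapAB U D Db hDb2 k) ⇑(mapBH U D Db hanti k) ∧
    Function.Exact ⇑(mapBH U D Db hanti k) ⇑(mapHH U D Db k) ∧
    Function.Exact ⇑(mapHH U D Db k) ⇑(mapHC U D Db hDb2 k) ∧
    Function.Surjective ⇑(mapHC U D Db hDb2 k) := by
  refine ⟨qmap_injective _, qmap_exact _ _ _ _ inf_le_right ?_,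
    qmap_exact _ _ _ _ (inf_le_right.trans le_sup_left) ?_,
    qmap_exact _ _ _ _ le_sup_left ?_, qmap_surjective _⟩
  · exact le_sup_of_le_left (le_inf (inf_le_left.trans inf_le_right) inf_le_right)
  · rintro x ⟨hx, hx2⟩
    obtain ⟨a, ha, b, hb, rfl⟩ := Submodule.mem_sup.1 hx2
    refine Submodule.add_mem_sup ⟨?_, ha⟩ hb
    exact (Submodule.add_mem_iff_left _ (imDb_le_kerDb U Db hDb2 k hb)).1 hx
  · exact inf_le_right.trans (sup_le_sup_left le_sup_left _)
end

section
/- Suppose that in degree k the spaces H^k_∂̄, H^k_BC, D^k, E^k, F^k are finite-dimensional. Then dim H^k_BC + dim E^k = dim H^k_∂̄ + dim D^k + dim F^k. -/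
open Submodule LinearMap Module

theorem sq_chain {V : Type*} [AddCommGroup V] [Module ℂ V] {p r q : Submodule ℂ V}
    (hqr : q ≤ r) (hrp : r ≤ p) [FiniteDimensional ℂ (SubQuot p q)] :
    finrank ℂ (SubQuot p q) = finrank ℂ (SubQuot p r) + finrank ℂ (SubQuot r q) := by
  let f : SubQuot p q →ₗ[ℂ] SubQuot p r := qmap le_rfl hqr
  let g : SubQuot r q →ₗ[ℂ] SubQuot p q := qmap hrp le_rfl
  have hf : Function.Surjective f := by
    intro y
    obtain ⟨x, rfl⟩ := Submodule.Quotient.mk_surjective _ y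
    exact ⟨Submodule.Quotient.mk x, rfl⟩
  have hg : Function.Injective g := by
    rw [← LinearMap.ker_eq_bot, eq_bot_iff]
    intro y hy
    obtain ⟨x, rfl⟩ := Submodule.Quotient.mk_surjective _ y
    have hy' : (Submodule.Quotient.mk (Submodule.inclusion hrp x) : SubQuot p q) = 0 := hy
    rw [Submodule.Quotient.mk_eq_zero] at hy'
    rw [Submodule.mem_bot, Submodule.Quotient.mk_eq_zero]
    exact hy'
  have hfg : LinearMap.ker f = LinearMap.range g := by
    ext y
    constructor
    · intro hy
      obtain ⟨x, rfl⟩ := Submodule.Quotient.mk_surjective _ y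
      have hy' : (Submodule.Quotient.mk (Submodule.inclusion le_rfl x) : SubQuot p r) = 0 := hy
      rw [Submodule.Quotient.mk_eq_zero] at hy'
      exact ⟨Submodule.Quotient.mk ⟨x.1, hy'⟩, rfl⟩
    · rintro ⟨z, rfl⟩
      obtain ⟨x, rfl⟩ := Submodule.Quotient.mk_surjective _ z
      change (Submodule.Quotient.mk _ : SubQuot p r) = 0
      rw [Submodule.Quotient.mk_eq_zero]
      exact x.2
  have h := LinearMap.finrank_range_add_finrank_ker f
  rw [hfg, LinearMap.finrank_range_of_inj hg, LinearMap.range_eq_top.2 hf, finrank_top] at h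
  exact h.symm

theorem sq_second {V : Type*} [AddCommGroup V] [Module ℂ V] (p q : Submodule ℂ V) :
    finrank ℂ (SubQuot p (p ⊓ q)) = finrank ℂ (SubQuot (p ⊔ q) q) :=
  (LinearMap.quotientInfEquivSupQuotient p q).finrank_eq

theorem sq_main {V : Type*} [AddCommGroup V] [Module ℂ V] (K L N I J : Submodule ℂ V)
    (hJ : J ≤ K ⊓ I) (hI : I ≤ L) (hK : K ≤ N) (hL : L ≤ N)
    [FiniteDimensional ℂ (SubQuot L I)] [FiniteDimensional ℂ (SubQuot (K ⊓ L) J)]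
    [FiniteDimensional ℂ (SubQuot N (K ⊔ I))] :
    finrank ℂ (SubQuot (K ⊓ L) J) + finrank ℂ (SubQuot N (K ⊔ I)) =
      finrank ℂ (SubQuot L I) + finrank ℂ (SubQuot (K ⊓ I) J)
        + finrank ℂ (SubQuot N (K ⊔ L)) := by
  have e1 := sq_chain hJ (inf_le_inf_left K hI)
  have e2 := sq_chain (sup_le_sup_left hI K) (sup_le hK hL)
  have e3 := sq_chain (p := L) (r := (K ⊓ L) ⊔ I) (q := I) le_sup_right (sup_le inf_le_right hI)
  have e4 := sq_second (K ⊓ L) I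
  have e5 := sq_second L (K ⊔ I)
  rw [inf_assoc, inf_eq_right.2 hI] at e4
  have a1 : L ⊔ (K ⊔ I) = K ⊔ L := by
    rw [sup_left_comm, sup_eq_left.2 hI]
  have a2 : L ⊓ (K ⊔ I) = (K ⊓ L) ⊔ I := by
    rw [inf_comm, sup_comm K I, sup_inf_assoc_of_le K hI, sup_comm]
  rw [a1, a2] at e5
  omega

theorem cast_D_zero (U : ℤ → Type*) [∀ k, AddCommGroup (U k)] [∀ k, Module ℂ (U k)]
    (D : ∀ k : ℤ, U k →ₗ[ℂ] U (k + 1)) (hD2 : ∀ k : ℤ, (D (k + 1)).comp (D k) = 0)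
    {m k : ℤ} (h : m + 1 = k) (x : U m) : D k (castU U h (D m x)) = 0 := by
  subst h
  exact LinearMap.congr_fun (hD2 m) x

theorem cast_Db_zero (U : ℤ → Type*) [∀ k, AddCommGroup (U k)] [∀ k, Module ℂ (U k)]
    (Db : ∀ k : ℤ, U k →ₗ[ℂ] U (k - 1)) (hDb2 : ∀ k : ℤ, (Db (k - 1)).comp (Db k) = 0)
    {m k : ℤ} (h : m - 1 = k) (x : U m) : Db k (castU U h (Db m x)) = 0 := by
  subst h
  exact LinearMap.congr_fun (hDb2 m) x

/-- the Varouchas dimension identity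
`dim H^k_BC + dim E^k = dim H^k_∂̄ + dim D^k + dim F^k`. -/
theorem varouchas_dim_identity_two
    (n : ℕ) (U : ℤ → Type*) [∀ k, AddCommGroup (U k)] [∀ k, Module ℂ (U k)]
    (hvan : ∀ k : ℤ, (n : ℤ) < |k| → ∀ x : U k, x = 0)
    (D : ∀ k : ℤ, U k →ₗ[ℂ] U (k + 1)) (Db : ∀ k : ℤ, U k →ₗ[ℂ] U (k - 1))
    (hD2 : ∀ k : ℤ, (D (k + 1)).comp (D k) = 0)
    (hDb2 : ∀ k : ℤ, (Db (k - 1)).comp (Db k) = 0)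
    (hanti : ∀ k : ℤ, ddbar U D Db k
      + (castU U (show k + 1 - 1 = k by ring)).comp ((Db (k + 1)).comp (D k)) = 0)
    (k : ℤ)
    (h1 : FiniteDimensional ℂ (Hdb U Db k))
    (h2 : FiniteDimensional ℂ (HBC U D Db k))
    (h3 : FiniteDimensional ℂ (Dvar U D Db k))
    (h4 : FiniteDimensional ℂ (Evar U D Db k))
    (h5 : FiniteDimensional ℂ (Fvar U D Db k)) :
    finrank ℂ (HBC U D Db k) + finrank ℂ (Evar U D Db k)
      = finrank ℂ (Hdb U Db k) + finrank ℂ (Dvar U D Db k) + finrank ℂ (Fvar U D Db k) := by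
  have hd : ∀ x : U k, ddbar U D Db k x
      = -(castU U (show k + 1 - 1 = k by ring) (Db (k + 1) (D k x))) := fun x =>
    eq_neg_of_add_eq_zero_left (LinearMap.congr_fun (hanti k) x)
  refine sq_main (kerD U D k) (kerDb U Db k) (kerDDbar U D Db k) (imDb U Db k)
    (imDDbar U D Db k) ?_ ?_ ?_ ?_
  · rintro _ ⟨x, rfl⟩
    refine ⟨cast_D_zero U D hD2 _ _, ?_⟩
    rw [hd]
    exact Submodule.neg_mem _ ⟨D k x, rfl⟩
  · rintro _ ⟨x, rfl⟩
    exact cast_Db_zero U Db hDb2 _ _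
  · intro x hx
    have hx' : D k x = 0 := hx
    change ddbar U D Db k x = 0
    rw [hd, hx']
    simp
  · intro x hx
    have hx' : Db k x = 0 := hx
    change ddbar U D Db k x = 0
    simp [ddbar, hx']
end

section
/- Suppose the ∂∂̄-lemma holds in every degree, i.e. for every k one has ker ∂̄ ∩ ∂(U^{k-1}) = ker ∂ ∩ ∂̄(U^{k+1}) = (∂∂̄)(U^k) as subspaces of U^k. Then for every k the map H^k_BC → H^k_∂̄ induced by the identity on representatives is a linear isomorphism; in particular dim H^k_BC = dim H^k_∂̄ whenever these are finite-dimensional. -/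
open Submodule LinearMap Module

section Maps

variable (U : ℤ → Type*) [∀ k, AddCommGroup (U k)] [∀ k, Module ℂ (U k)]
variable (D : ∀ k : ℤ, U k →ₗ[ℂ] U (k + 1)) (Db : ∀ k : ℤ, U k →ₗ[ℂ] U (k - 1))
variable (hanti : ∀ k : ℤ, ddbar U D Db k
  + (castU U (show k + 1 - 1 = k by ring)).comp ((Db (k + 1)).comp (D k)) = 0)

/-- The map `H^k_BC → H^k_∂̄` induced by the identity on representatives. -/
def mapBCH (k : ℤ) : HBC U D Db k →ₗ[ℂ] Hdb U Db k :=
  qmap inf_le_right (imDDbar_le_imDb U D Db hanti k)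

end Maps
lemma D_castU_aux (U : ℤ → Type*) [∀ k, AddCommGroup (U k)] [∀ k, Module ℂ (U k)]
    (D : ∀ k : ℤ, U k →ₗ[ℂ] U (k + 1)) {a b : ℤ} (h : a = b) (x : U a) :
    D b (castU U h x) = castU U (show a + 1 = b + 1 by rw [h]) (D a x) := by
  subst h; rfl

lemma castU_inj_aux (U : ℤ → Type*) [∀ k, AddCommGroup (U k)] [∀ k, Module ℂ (U k)]
    {a b : ℤ} (h : a = b) (x : U a) (hx : castU U h x = 0) : x = 0 := by
  subst h; exact hx

lemma castU_castU_aux (U : ℤ → Type*) [∀ k, AddCommGroup (U k)] [∀ k, Module ℂ (U k)]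
    {a b : ℤ} (h : b = a) (h' : a = b) (x : U a) : castU U h (castU U h' x) = x := by
  subst h; rfl

/-- if the `∂∂̄`-lemma holds in every degree, then the natural map
`H^k_BC → H^k_∂̄` is an isomorphism for every `k`; in particular the dimensions agree
whenever the cohomologies are finite-dimensional. -/
theorem ddbar_lemma_implies_BC_iso_dbar
    (n : ℕ) (U : ℤ → Type*) [∀ k, AddCommGroup (U k)] [∀ k, Module ℂ (U k)]
    (hvan : ∀ k : ℤ, (n : ℤ) < |k| → ∀ x : U k, x = 0)
    (D : ∀ k : ℤ, U k →ₗ[ℂ] U (k + 1)) (Db : ∀ k : ℤ, U k →ₗ[ℂ] U (k - 1))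
    (hD2 : ∀ k : ℤ, (D (k + 1)).comp (D k) = 0)
    (hDb2 : ∀ k : ℤ, (Db (k - 1)).comp (Db k) = 0)
    (hanti : ∀ k : ℤ, ddbar U D Db k
      + (castU U (show k + 1 - 1 = k by ring)).comp ((Db (k + 1)).comp (D k)) = 0)
    (hlemma : ∀ k : ℤ, kerDb U Db k ⊓ imD U D k = imDDbar U D Db k ∧
      kerD U D k ⊓ imDb U Db k = imDDbar U D Db k) :
    (∀ k : ℤ, Function.Bijective ⇑(mapBCH U D Db hanti k)) ∧
    (∀ k : ℤ, FiniteDimensional ℂ (HBC U D Db k) → FiniteDimensional ℂ (Hdb U Db k) →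
      finrank ℂ (HBC U D Db k) = finrank ℂ (Hdb U Db k)) := by
  have key : ∀ k : ℤ, Function.Bijective ⇑(mapBCH U D Db hanti k) := by
    intro k
    constructor
    · rw [injective_iff_map_eq_zero]
      intro a ha
      obtain ⟨x, rfl⟩ := Submodule.Quotient.mk_surjective _ a
      have hx : (Submodule.Quotient.mk (Submodule.inclusion inf_le_right x) : Hdb U Db k) = 0 := ha
      rw [Submodule.Quotient.mk_eq_zero] at hx ⊢
      have hx' : (x : U k) ∈ imDb U Db k := hx
      change (x : U k) ∈ imDDbar U D Db k
      rw [← (hlemma k).2]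
      exact ⟨x.2.1, hx'⟩
    · intro a
      obtain ⟨⟨x, hx⟩, rfl⟩ := Submodule.Quotient.mk_surjective _ a
      have hx0 : Db k x = 0 := hx
      have h1 : Db (k + 1) (D k x) = 0 := by
        have h := DFunLike.congr_fun (hanti k) x
        simp only [ddbar, LinearMap.add_apply, LinearMap.comp_apply, LinearMap.zero_apply, hx0,
          map_zero, zero_add] at h
        exact castU_inj_aux U _ _ h
      have h2 : D k x ∈ imD U D (k + 1) := by
        refine ⟨castU U (show k = k + 1 - 1 by ring) x, ?_⟩
        simp only [LinearMap.comp_apply, D_castU_aux]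
        generalize_proofs p q
        generalize D k x = z
        exact castU_castU_aux U p q z
      have h3 : D k x ∈ imDDbar U D Db (k + 1) := by
        rw [← (hlemma (k + 1)).1]
        exact ⟨h1, h2⟩
      obtain ⟨y, hy⟩ := h3
      set w : U k := castU U (show k + 1 - 1 = k by ring) (Db (k + 1) y) with hw
      have hwim : w ∈ imDb U Db k := ⟨y, rfl⟩
      have hDw : D k w = D k x := by
        rw [hw, D_castU_aux, ← hy]
        rfl
      have hmem : x - w ∈ kerD U D k ⊓ kerDb U Db k := by
        refine ⟨?_, Submodule.sub_mem _ hx (imDb_le_kerDb U Db hDb2 k hwim)⟩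
        change D k (x - w) = 0
        rw [map_sub, hDw, sub_self]
      refine ⟨Submodule.Quotient.mk ⟨x - w, hmem⟩, ?_⟩
      change (Submodule.Quotient.mk (Submodule.inclusion inf_le_right ⟨x - w, hmem⟩) :
        Hdb U Db k) = _
      rw [Submodule.Quotient.eq]
      change (x - w) - x ∈ imDb U Db k
      have : (x - w) - x = -w := by abel
      rw [this]
      exact Submodule.neg_mem _ hwim
  exact ⟨key, fun k _ _ => (LinearEquiv.ofBijective _ (key k)).finrank_eq⟩
end

section
/- For fixed p ≥ 1 and q ≥ 0, if the map φ^{p,q}_+ : H^{p,q}_BC → H^{p,q}_∂ is injective, then the map φ^{p-1,q}_- : H^{p-1,q}_BC → H^{p-1,q}_∂̄ is surjective. -/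
open Submodule LinearMap Module

section Setup

variable (A : ℤ → ℤ → Type*) [∀ p q, AddCommGroup (A p q)] [∀ p q, Module ℂ (A p q)]

/-- The identification `A p q → A p' q'` induced by equalities of the bidegrees. -/
def castA {p q p' q' : ℤ} (h : p = p') (h' : q = q') : A p q →ₗ[ℂ] A p' q' := by
  subst h; subst h'; exact LinearMap.id

variable (d : ∀ p q : ℤ, A p q →ₗ[ℂ] A (p + 1) q) (db : ∀ p q : ℤ, A p q →ₗ[ℂ] A p (q + 1))

/-- The composite `∂∂̄ : A^{p,q} → A^{p+1,q} → A^{p+1,q+1}`. -/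
def ddb (p q : ℤ) : A p q →ₗ[ℂ] A (p + 1) (q + 1) := (db (p + 1) q).comp (d p q)

/-- `ker ∂ ∩ A^{p,q}` -/
def kerd (p q : ℤ) : Submodule ℂ (A p q) := LinearMap.ker (d p q)

/-- `ker ∂̄ ∩ A^{p,q}` -/
def kerdb (p q : ℤ) : Submodule ℂ (A p q) := LinearMap.ker (db p q)

/-- `∂(A^{p-1,q})` -/
def imd (p q : ℤ) : Submodule ℂ (A p q) :=
  LinearMap.range ((castA A (show p - 1 + 1 = p by ring) rfl).comp (d (p - 1) q))

/-- `∂̄(A^{p,q-1})` -/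
def imdb (p q : ℤ) : Submodule ℂ (A p q) :=
  LinearMap.range ((castA A rfl (show q - 1 + 1 = q by ring)).comp (db p (q - 1)))

/-- `(∂∂̄)(A^{p-1,q-1})` -/
def imddb (p q : ℤ) : Submodule ℂ (A p q) :=
  LinearMap.range
    ((castA A (show p - 1 + 1 = p by ring) (show q - 1 + 1 = q by ring)).comp
      (ddb A d db (p - 1) (q - 1)))

end Setup

section Cohomology

variable (A : ℤ → ℤ → Type*) [∀ p q, AddCommGroup (A p q)] [∀ p q, Module ℂ (A p q)]
variable (d : ∀ p q : ℤ, A p q →ₗ[ℂ] A (p + 1) q) (db : ∀ p q : ℤ, A p q →ₗ[ℂ] A p (q + 1))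

/-- `H^{p,q}_∂ = (ker ∂ ∩ A^{p,q})/∂(A^{p-1,q})` -/
abbrev Hpqd (p q : ℤ) := SubQuot (kerd A d p q) (imd A d p q)

/-- `H^{p,q}_∂̄ = (ker ∂̄ ∩ A^{p,q})/∂̄(A^{p,q-1})` -/
abbrev Hpqdb (p q : ℤ) := SubQuot (kerdb A db p q) (imdb A db p q)

/-- `H^{p,q}_BC = (ker ∂ ∩ ker ∂̄ ∩ A^{p,q})/(∂∂̄)(A^{p-1,q-1})` -/
abbrev HpqBC (p q : ℤ) := SubQuot (kerd A d p q ⊓ kerdb A db p q) (imddb A d db p q)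

end Cohomology

section Lemmas

variable (A : ℤ → ℤ → Type*) [∀ p q, AddCommGroup (A p q)] [∀ p q, Module ℂ (A p q)]
variable (d : ∀ p q : ℤ, A p q →ₗ[ℂ] A (p + 1) q) (db : ∀ p q : ℤ, A p q →ₗ[ℂ] A p (q + 1))

lemma castA_castA {p q p' q' p'' q'' : ℤ} (h1 : p = p') (h2 : q = q') (h3 : p' = p'')
    (h4 : q' = q'') (x : A p q) :
    castA A h3 h4 (castA A h1 h2 x) = castA A (h1.trans h3) (h2.trans h4) x := by
  subst h1; subst h2; subst h3; subst h4; rfl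

lemma d_castA {p q p' q' : ℤ} (h : p = p') (h' : q = q') (x : A p q) :
    d p' q' (castA A h h' x) = castA A (show p + 1 = p' + 1 by rw [h]) h' (d p q x) := by
  subst h; subst h'; rfl

lemma db_castA {p q p' q' : ℤ} (h : p = p') (h' : q = q') (x : A p q) :
    db p' q' (castA A h h' x) = castA A h (show q + 1 = q' + 1 by rw [h']) (db p q x) := by
  subst h; subst h'; rfl

lemma imddb_le_imdb (p q : ℤ) : imddb A d db p q ≤ imdb A db p q := by
  rintro x ⟨y, rfl⟩
  refine ⟨castA A (show p - 1 + 1 = p by ring) rfl (d (p - 1) (q - 1) y), ?_⟩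
  simp only [LinearMap.comp_apply, ddb, db_castA, castA_castA]

lemma imddb_le_imd
    (hanti : ∀ p q : ℤ, (db (p + 1) q).comp (d p q) + (d p (q + 1)).comp (db p q) = 0)
    (p q : ℤ) : imddb A d db p q ≤ imd A d p q := by
  rintro x ⟨y, rfl⟩
  refine ⟨-(castA A rfl (show q - 1 + 1 = q by ring) (db (p - 1) (q - 1) y)), ?_⟩
  have h := DFunLike.congr_fun (hanti (p - 1) (q - 1)) y
  simp only [LinearMap.add_apply, LinearMap.comp_apply, LinearMap.zero_apply] at h
  simp only [LinearMap.comp_apply, map_neg, d_castA, castA_castA, ddb]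
  rw [eq_neg_of_add_eq_zero_left h, map_neg]

end Lemmas

section Phi

variable (A : ℤ → ℤ → Type*) [∀ p q, AddCommGroup (A p q)] [∀ p q, Module ℂ (A p q)]
variable (d : ∀ p q : ℤ, A p q →ₗ[ℂ] A (p + 1) q) (db : ∀ p q : ℤ, A p q →ₗ[ℂ] A p (q + 1))
variable (hanti : ∀ p q : ℤ, (db (p + 1) q).comp (d p q) + (d p (q + 1)).comp (db p q) = 0)

/-- `φ^{p,q}_+ : H^{p,q}_BC → H^{p,q}_∂`, induced by the identity on representatives. -/
def phiPlus (p q : ℤ) : HpqBC A d db p q →ₗ[ℂ] Hpqd A d p q :=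
  qmap inf_le_left (imddb_le_imd A d db hanti p q)

/-- `φ^{p,q}_- : H^{p,q}_BC → H^{p,q}_∂̄`, induced by the identity on representatives. -/
def phiMinus (p q : ℤ) : HpqBC A d db p q →ₗ[ℂ] Hpqdb A db p q :=
  qmap inf_le_right (imddb_le_imdb A d db p q)

end Phi
/-- if `φ^{p,q}_+` is injective then `φ^{p-1,q}_-` is surjective. -/
theorem phiPlus_injective_implies_phiMinus_surjective
    (A : ℤ → ℤ → Type*) [∀ p q, AddCommGroup (A p q)] [∀ p q, Module ℂ (A p q)]
    (hA0 : ∀ p q : ℤ, p < 0 ∨ q < 0 → ∀ x : A p q, x = 0)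
    (d : ∀ p q : ℤ, A p q →ₗ[ℂ] A (p + 1) q) (db : ∀ p q : ℤ, A p q →ₗ[ℂ] A p (q + 1))
    (hd2 : ∀ p q : ℤ, (d (p + 1) q).comp (d p q) = 0)
    (hdb2 : ∀ p q : ℤ, (db p (q + 1)).comp (db p q) = 0)
    (hanti : ∀ p q : ℤ, (db (p + 1) q).comp (d p q) + (d p (q + 1)).comp (db p q) = 0)
    (p q : ℤ) (hp : 1 ≤ p) (hq : 0 ≤ q)
    (hinj : Function.Injective ⇑(phiPlus A d db hanti p q)) :
    Function.Surjective ⇑(phiMinus A d db (p - 1) q) := by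
  intro z
  obtain ⟨⟨a, ha⟩, rfl⟩ := Submodule.Quotient.mk_surjective _ z
  have ha0 : db (p - 1) q a = 0 := ha
  have hpe : p - 1 + 1 = p := by ring
  have hqe : q - 1 + 1 = q := by ring
  have castinj : ∀ {p q p' q' : ℤ} (h : p = p') (h' : q = q') (x y : A p q),
      castA A h h' x = castA A h h' y → x = y := by
    intro p q p' q' h h' x y hxy
    subst h; subst h'; exact hxy
  have hd : d p q (castA A hpe rfl (d (p - 1) q a)) = 0 := by
    have h2 := DFunLike.congr_fun (hd2 (p - 1) q) a
    simp only [LinearMap.comp_apply, LinearMap.zero_apply] at h2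
    rw [d_castA, h2, map_zero]
  have hdb : db p q (castA A hpe rfl (d (p - 1) q a)) = 0 := by
    have h2 := DFunLike.congr_fun (hanti (p - 1) q) a
    simp only [LinearMap.add_apply, LinearMap.comp_apply, LinearMap.zero_apply, ha0, map_zero,
      add_zero] at h2
    rw [db_castA, h2, map_zero]
  have hmem : castA A hpe rfl (d (p - 1) q a) ∈ imddb A d db p q := by
    let b : ↥(kerd A d p q ⊓ kerdb A db p q) := ⟨castA A hpe rfl (d (p - 1) q a), hd, hdb⟩
    have h0 : (Submodule.Quotient.mk b : HpqBC A d db p q) = 0 := by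
      apply hinj
      rw [map_zero]
      refine (Submodule.Quotient.mk_eq_zero _).2 ?_
      exact ⟨a, rfl⟩
    have h1 := (Submodule.Quotient.mk_eq_zero _).1 h0
    exact h1
  obtain ⟨c, hc⟩ := hmem
  have h3 := DFunLike.congr_fun (hanti (p - 1) (q - 1)) c
  simp only [LinearMap.add_apply, LinearMap.comp_apply, LinearMap.zero_apply] at h3
  let e : A (p - 1) q := castA A rfl hqe (db (p - 1) (q - 1) c)
  have he : d (p - 1) q (a + e) = 0 := by
    apply castinj hpe rfl
    rw [map_add, map_add, ← hc, map_zero]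
    simp only [e, LinearMap.comp_apply, ddb, d_castA, castA_castA]
    rw [← map_add, h3, map_zero]
  have he2 : db (p - 1) q (a + e) = 0 := by
    have h4 := DFunLike.congr_fun (hdb2 (p - 1) (q - 1)) c
    simp only [LinearMap.comp_apply, LinearMap.zero_apply] at h4
    rw [map_add, ha0, zero_add]
    simp only [e, db_castA]
    rw [h4, map_zero]
  refine ⟨Submodule.Quotient.mk ⟨a + e, he, he2⟩, ?_⟩
  refine (Submodule.Quotient.eq _).2 ?_
  refine ⟨c, ?_⟩
  change e = (a + e) - a
  abel
end

section
/- For fixed p ≥ 0 and q ≥ 1, if the map φ^{p,q}_- : H^{p,q}_BC → H^{p,q}_∂̄ is injective, then the map φ^{p,q-1}_+ : H^{p,q-1}_BC → H^{p,q-1}_∂ is surjective. -/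
open Submodule LinearMap Module

/-- if `φ^{p,q}_-` is injective then `φ^{p,q-1}_+` is surjective. -/
theorem phiMinus_injective_implies_phiPlus_surjective
    (A : ℤ → ℤ → Type*) [∀ p q, AddCommGroup (A p q)] [∀ p q, Module ℂ (A p q)]
    (hA0 : ∀ p q : ℤ, p < 0 ∨ q < 0 → ∀ x : A p q, x = 0)
    (d : ∀ p q : ℤ, A p q →ₗ[ℂ] A (p + 1) q) (db : ∀ p q : ℤ, A p q →ₗ[ℂ] A p (q + 1))
    (hd2 : ∀ p q : ℤ, (d (p + 1) q).comp (d p q) = 0)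
    (hdb2 : ∀ p q : ℤ, (db p (q + 1)).comp (db p q) = 0)
    (hanti : ∀ p q : ℤ, (db (p + 1) q).comp (d p q) + (d p (q + 1)).comp (db p q) = 0)
    (p q : ℤ) (hp : 0 ≤ p) (hq : 1 ≤ q)
    (hinj : Function.Injective ⇑(phiMinus A d db p q)) :
    Function.Surjective ⇑(phiPlus A d db hanti p (q - 1)) := by
  intro c
  obtain ⟨⟨x, hx⟩, rfl⟩ := Submodule.Quotient.mk_surjective _ c
  have hx0 : d p (q - 1) x = 0 := hx
  have e : q - 1 + 1 = q := by ring
  have e' : p - 1 + 1 = p := by ring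
  have hcast : ∀ {a b a' b' : ℤ} (h : a = a') (h' : b = b') (u v : A a b),
      castA A h h' u = castA A h h' v → u = v := by
    intro a b a' b' h h' u v huv
    subst h; subst h'; exact huv
  have hy1 : d p q (castA A rfl e (db p (q - 1) x)) = 0 := by
    have h := DFunLike.congr_fun (hanti p (q - 1)) x
    simp only [LinearMap.add_apply, LinearMap.comp_apply, LinearMap.zero_apply, hx0, map_zero,
      zero_add] at h
    rw [d_castA, h, map_zero]
  have hy2 : db p q (castA A rfl e (db p (q - 1) x)) = 0 := by
    have h := DFunLike.congr_fun (hdb2 p (q - 1)) x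
    simp only [LinearMap.comp_apply, LinearMap.zero_apply] at h
    rw [db_castA, h, map_zero]
  have hz : castA A rfl e (db p (q - 1) x) ∈ imddb A d db p q := by
    let y : ↥(kerd A d p q ⊓ kerdb A db p q) := ⟨castA A rfl e (db p (q - 1) x), hy1, hy2⟩
    have h0 : (Submodule.Quotient.mk y : HpqBC A d db p q) = 0 := by
      apply hinj
      rw [map_zero]
      refine (Submodule.Quotient.mk_eq_zero _).2 ?_
      exact ⟨x, rfl⟩
    have h1 := (Submodule.Quotient.mk_eq_zero _).1 h0
    exact h1
  obtain ⟨z, hz⟩ := hz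
  have hw : db p (q - 1) (castA A e' rfl (d (p - 1) (q - 1) z)) = db p (q - 1) x := by
    apply hcast rfl e
    rw [← hz, db_castA, castA_castA]
    rfl
  have hdw : d p (q - 1) (castA A e' rfl (d (p - 1) (q - 1) z)) = 0 := by
    have h := DFunLike.congr_fun (hd2 (p - 1) (q - 1)) z
    simp only [LinearMap.comp_apply, LinearMap.zero_apply] at h
    rw [d_castA, h, map_zero]
  have hv1 : d p (q - 1) (x - castA A e' rfl (d (p - 1) (q - 1) z)) = 0 := by
    rw [map_sub, hx0, hdw, sub_zero]
  have hv2 : db p (q - 1) (x - castA A e' rfl (d (p - 1) (q - 1) z)) = 0 := by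
    rw [map_sub, hw, sub_self]
  refine ⟨Submodule.Quotient.mk ⟨x - castA A e' rfl (d (p - 1) (q - 1) z), hv1, hv2⟩, ?_⟩
  refine (Submodule.Quotient.eq _).2 ?_
  refine ⟨-z, ?_⟩
  simp
end

section
/- Suppose that for all p, q ≥ 0 the spaces H^{p,q}_BC, H^{p,q}_∂ and H^{p,q}_∂̄ are finite-dimensional with dim H^{p,q}_BC = dim H^{p,q}_∂ = dim H^{p,q}_∂̄. If for some r, s ≥ 0 the map φ^{r,s}_- : H^{r,s}_BC → H^{r,s}_∂̄ is not an isomorphism, then φ^{r+1,s+1}_- : H^{r+1,s+1}_BC → H^{r+1,s+1}_∂̄ is not an isomorphism. -/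
open Submodule LinearMap Module

lemma castA_rfl' (A : ℤ → ℤ → Type*) [∀ p q, AddCommGroup (A p q)] [∀ p q, Module ℂ (A p q)]
    {p q : ℤ} (h : p = p) (h' : q = q) (x : A p q) : castA A h h' x = x := rfl

lemma qmap_inj {V : Type*} [AddCommGroup V] [Module ℂ V] {p p' q q' : Submodule ℂ V}
    (hp : p ≤ p') (hq : q ≤ q') (h : Function.Injective (qmap hp hq)) (x : V) (hx : x ∈ p)
    (hx' : x ∈ q') : x ∈ q := by
  have h1 : qmap hp hq (Submodule.Quotient.mk ⟨x, hx⟩) = 0 := by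
    rw [qmap, Submodule.mapQ_apply, Submodule.Quotient.mk_eq_zero]
    exact hx'
  have h2 := h (h1.trans (map_zero _).symm)
  rw [Submodule.Quotient.mk_eq_zero] at h2
  exact h2

lemma qmap_surj {V : Type*} [AddCommGroup V] [Module ℂ V] {p p' q q' : Submodule ℂ V}
    (hp : p ≤ p') (hq : q ≤ q') (h : ∀ x ∈ p', ∃ y ∈ p, y - x ∈ q') :
    Function.Surjective (qmap hp hq) := by
  intro z
  obtain ⟨⟨x, hx⟩, rfl⟩ := Submodule.Quotient.mk_surjective _ z
  obtain ⟨y, hy, hyx⟩ := h x hx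
  refine ⟨Submodule.Quotient.mk ⟨y, hy⟩, ?_⟩
  rw [qmap, Submodule.mapQ_apply, Submodule.Quotient.eq]
  exact hyx

section Helpers

variable (A : ℤ → ℤ → Type*) [∀ p q, AddCommGroup (A p q)] [∀ p q, Module ℂ (A p q)]
variable (d : ∀ p q : ℤ, A p q →ₗ[ℂ] A (p + 1) q) (db : ∀ p q : ℤ, A p q →ₗ[ℂ] A p (q + 1))

lemma d_mem_imd (p q : ℤ) (y : A p q) : d p q y ∈ imd A d (p + 1) q := by
  refine ⟨castA A (show p = p + 1 - 1 by ring) rfl y, ?_⟩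
  simp only [LinearMap.comp_apply, d_castA, castA_castA, castA_rfl']

lemma db_mem_imdb (p q : ℤ) (y : A p q) : db p q y ∈ imdb A db p (q + 1) := by
  refine ⟨castA A rfl (show q = q + 1 - 1 by ring) y, ?_⟩
  simp only [LinearMap.comp_apply, db_castA, castA_castA, castA_rfl']

lemma exists_of_mem_imddb (p q : ℤ) (x : A (p + 1) (q + 1))
    (hx : x ∈ imddb A d db (p + 1) (q + 1)) : ∃ y : A p q, db (p + 1) q (d p q y) = x := by
  obtain ⟨y, rfl⟩ := hx
  refine ⟨castA A (show p + 1 - 1 = p by ring) (show q + 1 - 1 = q by ring) y, ?_⟩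
  simp only [LinearMap.comp_apply, ddb, d_castA, db_castA]

end Helpers

/-- under the dimension assumptions, if `φ^{r,s}_-` is not an isomorphism
then neither is `φ^{r+1,s+1}_-`. -/
theorem phiMinus_not_iso_propagates
    (A : ℤ → ℤ → Type*) [∀ p q, AddCommGroup (A p q)] [∀ p q, Module ℂ (A p q)]
    (hA0 : ∀ p q : ℤ, p < 0 ∨ q < 0 → ∀ x : A p q, x = 0)
    (d : ∀ p q : ℤ, A p q →ₗ[ℂ] A (p + 1) q) (db : ∀ p q : ℤ, A p q →ₗ[ℂ] A p (q + 1))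
    (hd2 : ∀ p q : ℤ, (d (p + 1) q).comp (d p q) = 0)
    (hdb2 : ∀ p q : ℤ, (db p (q + 1)).comp (db p q) = 0)
    (hanti : ∀ p q : ℤ, (db (p + 1) q).comp (d p q) + (d p (q + 1)).comp (db p q) = 0)
    (hfinBC : ∀ p q : ℤ, 0 ≤ p → 0 ≤ q → FiniteDimensional ℂ (HpqBC A d db p q))
    (hfind : ∀ p q : ℤ, 0 ≤ p → 0 ≤ q → FiniteDimensional ℂ (Hpqd A d p q))
    (hfindb : ∀ p q : ℤ, 0 ≤ p → 0 ≤ q → FiniteDimensional ℂ (Hpqdb A db p q))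
    (hdim : ∀ p q : ℤ, 0 ≤ p → 0 ≤ q →
      finrank ℂ (HpqBC A d db p q) = finrank ℂ (Hpqd A d p q) ∧
      finrank ℂ (HpqBC A d db p q) = finrank ℂ (Hpqdb A db p q))
    (r s : ℤ) (hr : 0 ≤ r) (hs : 0 ≤ s)
    (hniso : ¬ Function.Bijective ⇑(phiMinus A d db r s)) :
    ¬ Function.Bijective ⇑(phiMinus A d db (r + 1) (s + 1)) := by
  have hd2' : ∀ p q (x : A p q), d (p + 1) q (d p q x) = 0 := fun p q x =>
    DFunLike.congr_fun (hd2 p q) x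
  have hdb2' : ∀ p q (x : A p q), db p (q + 1) (db p q x) = 0 := fun p q x =>
    DFunLike.congr_fun (hdb2 p q) x
  have hanti' : ∀ p q (x : A p q), db (p + 1) q (d p q x) + d p (q + 1) (db p q x) = 0 :=
    fun p q x => DFunLike.congr_fun (hanti p q) x
  intro hbij
  apply hniso
  -- `φ₊^{r+1,s}` is surjective
  have hsurj : Function.Surjective (phiPlus A d db hanti (r + 1) s) := by
    refine qmap_surj _ _ fun x hx => ?_
    have hx0 : d (r + 1) s x = 0 := hx
    have hmem : db (r + 1) s x ∈ imddb A d db (r + 1) (s + 1) := by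
      refine qmap_inj _ _ hbij.1 _ ⟨?_, ?_⟩ (db_mem_imdb A db _ _ x)
      · change d (r + 1) (s + 1) (db (r + 1) s x) = 0
        have := hanti' (r + 1) s x
        rwa [hx0, map_zero, zero_add] at this
      · exact hdb2' _ _ x
    obtain ⟨y, hy⟩ := exists_of_mem_imddb A d db r s _ hmem
    refine ⟨x - d r s y, ⟨?_, ?_⟩, ?_⟩
    · change d (r + 1) s (x - d r s y) = 0
      rw [map_sub, hx0, hd2', sub_zero]
    · change db (r + 1) s (x - d r s y) = 0
      rw [map_sub, hy, sub_self]
    · rw [sub_sub_cancel_left]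
      exact neg_mem (d_mem_imd A d r s y)
  have hr1 : 0 ≤ r + 1 := by omega
  haveI := hfinBC (r + 1) s hr1 hs
  haveI := hfind (r + 1) s hr1 hs
  haveI := hfinBC r s hr hs
  haveI := hfindb r s hr hs
  have hinj : Function.Injective (phiPlus A d db hanti (r + 1) s) :=
    (LinearMap.injective_iff_surjective_of_finrank_eq_finrank (hdim (r + 1) s hr1 hs).1).2 hsurj
  have hsurj' : Function.Surjective (phiMinus A d db r s) := by
    clear hsurj hbij hniso
    obtain ⟨t, rfl⟩ : ∃ t, s = t + 1 := ⟨s - 1, by ring⟩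
    refine qmap_surj _ _ fun x hx => ?_
    have hx0 : db r (t + 1) x = 0 := hx
    have hmem : d r (t + 1) x ∈ imddb A d db (r + 1) (t + 1) := by
      refine qmap_inj _ _ hinj _ ⟨?_, ?_⟩ (d_mem_imd A d _ _ x)
      · exact hd2' _ _ x
      · change db (r + 1) (t + 1) (d r (t + 1) x) = 0
        have := hanti' r (t + 1) x
        rwa [hx0, map_zero, add_zero] at this
    obtain ⟨y, hy⟩ := exists_of_mem_imddb A d db r t _ hmem
    refine ⟨x + db r t y, ⟨?_, ?_⟩, ?_⟩
    · change d r (t + 1) (x + db r t y) = 0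
      rw [map_add, ← hy, hanti']
    · change db r (t + 1) (x + db r t y) = 0
      rw [map_add, hx0, hdb2', add_zero]
    · rw [add_sub_cancel_left]
      exact db_mem_imdb A db r t y
  exact ⟨(LinearMap.injective_iff_surjective_of_finrank_eq_finrank (hdim r s hr hs).2).2 hsurj',
    hsurj'⟩
end
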